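/- arXiv:2305.02070 — 2 statements merged into one kernel-verified Lean document; each statement's English description precedes it below -/
import Mathlib

section
/- Let m < F be positive integers with m not dividing F, let S ∈ 𝓡(F,m), and let T be a numerical semigroup. Then T ∈ 𝓡(F,m), T ≠ Δ(F,m) and T \ {r(T)} = S hold if and only if there exists x ∈ SG(S) with m < x < r(S) and x ≠ F such that T = S ∪ {x}. -/
/-!
Membership in `RFm F m` unfolds to order-theoretic conditions without `sInf` and `sSup`
(`mem_RFm_iff`), and the ratio of a member is a genuine least element (`isLeast_ratio`), because
`F + 1` and `F + 2` are not both multiples of `m ≥ 2`.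

If `T \ {r(T)} = S`, then `x = r(T)` is the required special gap: sums `x + s` and `2 * x` lie in
`T` and differ from `x`, and `r(S)`, being an element of `T` not divisible by `m` and different
from `x`, exceeds `x`. Conversely, if `T = S ∪ {x}` with `m < x < r(S)` and `x ∉ S`, then `m ∤ x`,
and the elements of `T` below `x` lie in `S` below `r(S)`, hence are multiples of `m`; so
`r(T) = x`. Finally `T ≠ Δ(F, m)`, since `x ≤ F` is not a multiple of `m`.
-/

/-- A numerical semigroup: a submonoid of (ℕ,+) with finite complement. -/
def IsNumericalSemigroup (S : Set ℕ) : Prop :=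
  0 ∈ S ∧ (∀ a ∈ S, ∀ b ∈ S, a + b ∈ S) ∧ Sᶜ.Finite

/-- The multiplicity m(S): least positive element of S. -/
noncomputable def mult (S : Set ℕ) : ℕ := sInf {s | s ∈ S ∧ s ≠ 0}

/-- The ratio r(S): least s ∈ S not divisible by the multiplicity. -/
noncomputable def ratio (S : Set ℕ) : ℕ := sInf {s | s ∈ S ∧ ¬ mult S ∣ s}

/-- The Frobenius number F(S): largest integer not in S. -/
noncomputable def frob (S : Set ℕ) : ℕ := sSup Sᶜ

/-- The genus g(S): number of gaps of S. -/
noncomputable def genus (S : Set ℕ) : ℕ := Sᶜ.ncard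

/-- Pseudo-Frobenius numbers of S. -/
def PF (S : Set ℕ) : Set ℕ := {x | x ∉ S ∧ ∀ s ∈ S, s ≠ 0 → x + s ∈ S}

/-- Special gaps of S. -/
def SG (S : Set ℕ) : Set ℕ := {x | x ∈ PF S ∧ 2 * x ∈ S}

/-- The Apéry set of n in S: elements s of S with s - n ∉ S (as integers). -/
def Ap (S : Set ℕ) (n : ℕ) : Set ℕ := {s | s ∈ S ∧ ¬ ∃ t ∈ S, t + n = s}

/-- The minimal system of generators of a numerical semigroup:
    nonzero elements not expressible as a sum of two nonzero elements. -/
def msg (S : Set ℕ) : Set ℕ :=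
  {x | x ∈ S ∧ x ≠ 0 ∧ ∀ a ∈ S, ∀ b ∈ S, a ≠ 0 → b ≠ 0 → x ≠ a + b}

/-- The embedding dimension e(S). -/
noncomputable def edim (S : Set ℕ) : ℕ := (msg S).ncard

/-- The submonoid of ℕ generated by a set A. -/
def closureSet (A : Set ℕ) : Set ℕ := (AddSubmonoid.closure A : Set ℕ)

/-- M is the minimum of the family R with respect to inclusion. -/
def IsMinOf (R : Set (Set ℕ)) (M : Set ℕ) : Prop := M ∈ R ∧ ∀ S ∈ R, M ⊆ S

/-- A ratio-covariety. -/
def IsRatioCovariety (R : Set (Set ℕ)) : Prop :=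
  R.Nonempty ∧ (∀ S ∈ R, IsNumericalSemigroup S) ∧
  (∃ M, IsMinOf R M) ∧
  (∀ S ∈ R, ∀ T ∈ R, S ∩ T ∈ R) ∧
  (∀ S ∈ R, ∀ M, IsMinOf R M → S ≠ M → S \ {ratio S} ∈ R)

/-- The family 𝓡(F,m) of numerical semigroups with Frobenius number F and multiplicity m. -/
def RFm (F m : ℕ) : Set (Set ℕ) :=
  {S | IsNumericalSemigroup S ∧ frob S = F ∧ mult S = m}

/-- Δ(F,m) = ⟨m⟩ ∪ {F+1, →}. -/
def Delta (F m : ℕ) : Set ℕ := {n | m ∣ n} ∪ {n | F < n}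

/-- X is an 𝓡-set: disjoint from min(𝓡) and contained in some element of 𝓡. -/
def IsRSet (R : Set (Set ℕ)) (X : Set ℕ) : Prop :=
  (∀ M, IsMinOf R M → X ∩ M = ∅) ∧ ∃ S ∈ R, X ⊆ S

/-- 𝓡[X]: the intersection of all elements of 𝓡 containing X. -/
def RGen (R : Set (Set ℕ)) (X : Set ℕ) : Set ℕ := ⋂₀ {S | S ∈ R ∧ X ⊆ S}

/-- The 𝓡-rank of S. -/
noncomputable def Rrank (R : Set (Set ℕ)) (S : Set ℕ) : ℕ :=
  sInf {n | ∃ X, IsRSet R X ∧ RGen R X = S ∧ X.ncard = n}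

/-- For positive `F` and `m`, the infimum and supremum in `RFm F m` are attained. -/
lemma mem_RFm_iff {F m : ℕ} (hF : 0 < F) (hm : 0 < m) {S : Set ℕ} (hS : IsNumericalSemigroup S) :
    S ∈ RFm F m ↔ (F ∉ S ∧ ∀ n, F < n → n ∈ S) ∧ (m ∈ S ∧ ∀ s ∈ S, s ≠ 0 → m ≤ s) := by
  have hb : BddAbove Sᶜ := hS.2.2.bddAbove
  constructor
  · rintro ⟨-, rfl, rfl⟩
    refine ⟨⟨?_, fun n hn => ?_⟩, ?_, fun s hs h0 => Nat.sInf_le ⟨hs, h0⟩⟩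
    · have hne : (Sᶜ).Nonempty := by
        by_contra h
        rw [Set.not_nonempty_iff_eq_empty] at h
        simp [frob, h] at hF
      exact Nat.sSup_mem hne hb
    · by_contra h
      exact absurd (le_csSup hb h) (not_le.mpr hn)
    · exact (Nat.sInf_mem (Nat.nonempty_of_pos_sInf hm)).1
  · rintro ⟨⟨h1, h2⟩, h3, h4⟩
    refine ⟨hS, IsGreatest.csSup_eq ⟨h1, fun n hn => ?_⟩,
      IsLeast.csInf_eq ⟨⟨h3, hm.ne'⟩, fun s hs => h4 s hs.1 hs.2⟩⟩
    by_contra h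
    exact hn (h2 n (not_le.mp h))

lemma isLeast_ratio {F m : ℕ} (hdvd : ¬ m ∣ F) (hF : 0 < F) (hm : 0 < m) {S : Set ℕ}
    (hS : S ∈ RFm F m) : IsLeast {s | s ∈ S ∧ ¬ m ∣ s} (ratio S) := by
  have h := ((mem_RFm_iff hF hm hS.1).1 hS).1.2
  have hne : {s | s ∈ S ∧ ¬ m ∣ s}.Nonempty := by
    by_cases h1 : m ∣ F + 1
    · refine ⟨F + 2, h _ (by omega), fun h2 => hdvd ?_⟩
      -- consecutive multiples force `m ∣ 1`
      have : m ∣ 1 := (Nat.dvd_add_right h1).1 h2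
      exact this.trans (one_dvd F)
    · exact ⟨F + 1, h _ (by omega), h1⟩
  have e : ratio S = sInf {s | s ∈ S ∧ ¬ m ∣ s} := by rw [ratio, hS.2.2]
  rw [e]
  exact ⟨Nat.sInf_mem hne, fun s hs => Nat.sInf_le hs⟩

lemma mem_of_mult_dvd {S : Set ℕ} (hS : IsNumericalSemigroup S) {m n : ℕ} (hm : m ∈ S)
    (h : m ∣ n) : n ∈ S := by
  obtain ⟨k, rfl⟩ := h
  induction k with
  | zero => exact hS.1
  | succ k ih => exact hS.2.1 _ ih _ hm

theorem children_in_RFm (m F : ℕ) (hm : 0 < m) (hmF : m < F) (hdvd : ¬ m ∣ F)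
    (S : Set ℕ) (hS : S ∈ RFm F m) (T : Set ℕ) (hT : IsNumericalSemigroup T) :
    (T ∈ RFm F m ∧ T ≠ Delta F m ∧ T \ {ratio T} = S) ↔
      ∃ x ∈ SG S, m < x ∧ x < ratio S ∧ x ≠ F ∧ T = S ∪ {x} := by
  have hF : 0 < F := by omega
  obtain ⟨⟨hFS, hSF⟩, hmS, hSm⟩ := (mem_RFm_iff hF hm hS.1).1 hS
  obtain ⟨⟨hrS, hrd⟩, hrmin⟩ := isLeast_ratio hdvd hF hm hS
  constructor
  · rintro ⟨hTR, -, hTS⟩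
    obtain ⟨⟨hFT, -⟩, -, hTm⟩ := (mem_RFm_iff hF hm hT).1 hTR
    obtain ⟨⟨hxT, hxd⟩, hxmin⟩ := isLeast_ratio hdvd hF hm hTR
    generalize ratio T = x at *
    have hmem : ∀ y, y ∈ S ↔ y ∈ T ∧ y ≠ x := fun y => by rw [← hTS]; simp
    have hx0 : x ≠ 0 := by rintro rfl; exact hxd (dvd_zero m)
    have hmx : m ≠ x := by rintro rfl; exact hxd dvd_rfl
    refine ⟨x, ⟨⟨fun h => ((hmem x).1 h).2 rfl, fun s hs h0 => ?_⟩, ?_⟩,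
      lt_of_le_of_ne (hTm x hxT hx0) hmx, ?_, ?_, ?_⟩
    · exact (hmem _).2 ⟨hT.2.1 _ hxT _ ((hmem s).1 hs).1, by omega⟩
    · exact (hmem _).2 ⟨two_mul x ▸ hT.2.1 _ hxT _ hxT, by omega⟩
    · have h := (hmem _).1 hrS
      exact lt_of_le_of_ne (hxmin ⟨h.1, hrd⟩) h.2.symm
    · rintro rfl; exact hFT hxT
    · rw [← hTS, Set.sdiff_union_self, Set.union_eq_left.2 (by simpa using hxT)]
  · rintro ⟨x, ⟨⟨hxS, -⟩, -⟩, hmx, hxr, hxF, rfl⟩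
    have hxd : ¬ m ∣ x := fun h => hxS (mem_of_mult_dvd hS.1 hmS h)
    have hTR : S ∪ {x} ∈ RFm F m := by
      refine (mem_RFm_iff hF hm hT).2
        ⟨⟨?_, fun n hn => Or.inl (hSF n hn)⟩, Or.inl hmS, ?_⟩
      · rintro (h | h)
        · exact hFS h
        · exact hxF h.symm
      · rintro s (hs | rfl) h0
        · exact hSm s hs h0
        · exact hmx.le
    have hr : ratio (S ∪ {x}) = x := by
      refine (isLeast_ratio hdvd hF hm hTR).unique ⟨⟨Or.inr rfl, hxd⟩, ?_⟩
      rintro y ⟨hy | rfl, hyd⟩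
      · exact hxr.le.trans (hrmin ⟨hy, hyd⟩)
      · exact le_rfl
    refine ⟨hTR, fun h => ?_, ?_⟩
    · have hx : x ∈ Delta F m := h ▸ Or.inr rfl
      exact hx.elim hxd fun h' => hxS (hSF x h')
    · rw [hr, Set.union_sdiff_right, Set.sdiff_singleton_eq_self hxS]
end

section
/- Let m and F be positive integers with F > 2m and m not dividing F. Then there exists S ∈ 𝓡(F,m) whose 𝓡(F,m)-rank equals m − 2; in fact S = ⟨m, F−(m−1), F−(m−2), …, F−1⟩ ∪ {n ∈ ℕ : n ≥ F+1} is such a semigroup, where ⟨a_1,…,a_p⟩ denotes the submonoid of ℕ generated by a_1,…,a_p. -/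
/-- The non-multiples of `m` strictly between `F - m` and `F`. The subtraction is truncated, which
is harmless since all uses assume `2 * m < F`. -/
def window (F m : ℕ) : Set ℕ := {n | F - m < n ∧ n < F ∧ ¬ m ∣ n}

theorem le_of_mem_delta_union {F m : ℕ} (hF : 2 * m < F) {A : Set ℕ} (hA : A ⊆ window F m)
    {n : ℕ} (hn : n ∈ Delta F m ∪ A) (h0 : n ≠ 0) : m ≤ n := by
  rcases hn with (h | h) | h
  · exact Nat.le_of_dvd (Nat.pos_of_ne_zero h0) h
  · have : F < n := h
    omega
  · have := (hA h).1
    omega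

theorem delta_union_mem {F m : ℕ} (hm : 0 < m) (hF : 2 * m < F) (hdvd : ¬ m ∣ F)
    {A : Set ℕ} (hA : A ⊆ window F m) : Delta F m ∪ A ∈ RFm F m := by
  have hbig : ∀ n, F < n → n ∈ Delta F m ∪ A := fun n h => Or.inl (Or.inr h)
  -- A summand that is not a multiple of `m` exceeds `F - m`; the other one is zero or at least `m`.
  have hadd : ∀ a ∈ Delta F m ∪ A, ∀ b ∈ Delta F m ∪ A, ¬ m ∣ a → a + b ∈ Delta F m ∪ A := by
    intro a ha b hb hda
    by_cases hb0 : b = 0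
    · simpa [hb0] using ha
    have hmb := le_of_mem_delta_union hF hA hb hb0
    have : F - m < a := by
      rcases ha with (h | h) | h
      · exact absurd h hda
      · have : F < a := h
        omega
      · exact (hA h).1
    exact hbig _ (by omega)
  have hFn : F ∉ Delta F m ∪ A := by
    rintro ((h | h) | h)
    · exact hdvd h
    · exact lt_irrefl F h
    · exact lt_irrefl F (hA h).2.1
  have hub : ∀ n ∈ (Delta F m ∪ A)ᶜ, n ≤ F := fun n hn => by
    by_contra h
    exact hn (hbig n (by omega))
  refine ⟨⟨Or.inl (Or.inl (dvd_zero m)), ?_, (Set.finite_Iic F).subset hub⟩, ?_, ?_⟩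
  · intro a ha b hb
    by_cases hda : m ∣ a
    · by_cases hdb : m ∣ b
      · exact Or.inl (Or.inl (dvd_add hda hdb))
      · rw [add_comm]
        exact hadd b hb a ha hdb
    · exact hadd a ha b hb hda
  · exact IsGreatest.csSup_eq ⟨hFn, hub⟩
  · exact IsLeast.csInf_eq ⟨⟨Or.inl (Or.inl (dvd_refl m)), hm.ne'⟩,
      fun n hn => le_of_mem_delta_union hF hA hn.1 hn.2⟩

theorem delta_subset {F m : ℕ} (hm : 0 < m) {S : Set ℕ} (hS : S ∈ RFm F m) :
    Delta F m ⊆ S := by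
  obtain ⟨⟨h0, hadd, hfin⟩, hfrob, hmult⟩ := hS
  have hmS : m ∈ S := by
    have hne : {s | s ∈ S ∧ s ≠ 0}.Nonempty :=
      Nat.nonempty_of_pos_sInf (hm.trans_eq hmult.symm)
    have h : mult S ∈ S := (Nat.sInf_mem hne).1
    exact hmult ▸ h
  rintro n (⟨k, rfl⟩ | hn)
  · induction k with
    | zero => exact h0
    | succ k ih => exact hadd _ ih _ hmS
  · by_contra hnS
    have h : n ≤ frob S := le_csSup hfin.bddAbove hnS
    have hn : F < n := hn
    omega

theorem isMinOf_delta {F m : ℕ} (hm : 0 < m) (hF : 2 * m < F) (hdvd : ¬ m ∣ F) :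
    IsMinOf (RFm F m) (Delta F m) := by
  refine ⟨?_, fun S hS => delta_subset hm hS⟩
  simpa using delta_union_mem hm hF hdvd (Set.empty_subset (window F m))

theorem rgen_eq {F m : ℕ} (hm : 0 < m) (hF : 2 * m < F) (hdvd : ¬ m ∣ F)
    {A : Set ℕ} (hA : A ⊆ window F m) : RGen (RFm F m) A = Delta F m ∪ A :=
  Set.Subset.antisymm
    (Set.sInter_subset_of_mem ⟨delta_union_mem hm hF hdvd hA, Set.subset_union_right⟩)
    (Set.subset_sInter fun _ hS => Set.union_subset (delta_subset hm hS.1) hS.2)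

theorem disjoint_delta_window (F m : ℕ) : Disjoint (Delta F m) (window F m) := by
  rw [Set.disjoint_left]
  rintro n (h | h) hw
  · exact hw.2.2 h
  · exact lt_asymm hw.2.1 h

theorem closure_eq {F m : ℕ} (hm : 0 < m) (hF : 2 * m < F) (hdvd : ¬ m ∣ F) :
    closureSet ({m} ∪ Set.Icc (F - (m - 1)) (F - 1)) ∪ {n | F + 1 ≤ n} =
      Delta F m ∪ window F m := by
  obtain ⟨⟨h0, hadd, -⟩, -, -⟩ := delta_union_mem hm hF hdvd (subset_refl (window F m))
  apply Set.Subset.antisymm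
  · refine Set.union_subset ?_ fun n hn => Or.inl (Or.inr hn)
    let T : AddSubmonoid ℕ :=
      { carrier := Delta F m ∪ window F m
        zero_mem' := h0
        add_mem' := fun {a b} ha hb => hadd a ha b hb }
    have hT : AddSubmonoid.closure ({m} ∪ Set.Icc (F - (m - 1)) (F - 1)) ≤ T := by
      rw [AddSubmonoid.closure_le]
      rintro n (rfl | ⟨h1, h2⟩)
      · exact Or.inl (Or.inl (dvd_refl n))
      · by_cases hn : m ∣ n
        · exact Or.inl (Or.inl hn)
        · exact Or.inr ⟨by omega, by omega, hn⟩
    exact hT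
  · rintro n ((⟨k, rfl⟩ | hn) | ⟨h1, h2, -⟩)
    · left
      have h := AddSubmonoid.nsmul_mem (AddSubmonoid.closure ({m} ∪ Set.Icc (F - (m - 1)) (F - 1)))
        (AddSubmonoid.subset_closure (Or.inl rfl)) k
      rwa [smul_eq_mul, mul_comm] at h
    · exact Or.inr hn
    · exact Or.inl (AddSubmonoid.subset_closure (Or.inr ⟨by omega, by omega⟩))

theorem ncard_window {F m : ℕ} (hm : 0 < m) (hF : 2 * m < F) (hdvd : ¬ m ∣ F) :
    (window F m).ncard = m - 2 := by
  have hr : F % m < m := Nat.mod_lt F hm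
  have hr0 : 0 < F % m := Nat.pos_of_ne_zero fun h => hdvd (Nat.dvd_of_mod_eq_zero h)
  -- `F - F % m` is the only multiple of `m` strictly between `F - m` and `F`.
  have hw : window F m = ↑((Finset.Ioo (F - m) F).erase (F - F % m)) := by
    ext n
    simp only [window, Set.mem_ofPred_eq, Finset.coe_erase, Finset.coe_Ioo, Set.mem_sdiff,
      Set.mem_Ioo, Set.mem_singleton_iff]
    constructor
    · rintro ⟨h1, h2, h3⟩
      exact ⟨⟨h1, h2⟩, fun h => h3 (h ▸ Nat.dvd_sub_mod F)⟩
    · rintro ⟨⟨h1, h2⟩, h3⟩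
      refine ⟨h1, h2, ?_⟩
      rintro ⟨k, rfl⟩
      have h : F % m = F - m * k := by
        conv_lhs => rw [← Nat.sub_add_cancel h2.le, Nat.add_mul_mod_self_left]
        exact Nat.mod_eq_of_lt (by omega)
      omega
  rw [hw, Set.ncard_coe_finset, Finset.card_erase_of_mem (Finset.mem_Ioo.2 (by omega)),
    Nat.card_Ioo]
  omega

theorem exists_max_rank_semigroup (m F : ℕ) (hm : 0 < m) (hF : 2 * m < F)
    (hdvd : ¬ m ∣ F) :
    closureSet ({m} ∪ Set.Icc (F - (m - 1)) (F - 1)) ∪ {n | F + 1 ≤ n} ∈ RFm F m ∧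
    Rrank (RFm F m)
      (closureSet ({m} ∪ Set.Icc (F - (m - 1)) (F - 1)) ∪ {n | F + 1 ≤ n}) = m - 2 := by
  rw [closure_eq hm hF hdvd]
  have hmem := delta_union_mem hm hF hdvd (subset_refl (window F m))
  have hmin := isMinOf_delta hm hF hdvd
  refine ⟨hmem, ?_⟩
  rw [← ncard_window hm hF hdvd]
  refine IsLeast.csInf_eq ⟨⟨window F m, ⟨?_, _, hmem, Set.subset_union_right⟩,
    rgen_eq hm hF hdvd subset_rfl, rfl⟩, ?_⟩
  · intro M hM
    rw [Set.Subset.antisymm (hM.2 _ hmin.1) (hmin.2 _ hM.1)]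
    exact (disjoint_delta_window F m).symm.inter_eq
  · rintro _ ⟨X, ⟨hX, -⟩, hgen, rfl⟩
    have hXd : Disjoint X (Delta F m) := Set.disjoint_iff_inter_eq_empty.2 (hX _ hmin)
    have hXT : X ⊆ Delta F m ∪ window F m := hgen ▸ Set.subset_sInter fun _ hS => hS.2
    have hXw : X ⊆ window F m := hXd.subset_right_of_subset_union hXT
    rw [rgen_eq hm hF hdvd hXw] at hgen
    have hwX : window F m ⊆ X := (disjoint_delta_window F m).symm.subset_right_of_subset_union
      (hgen ▸ Set.subset_union_right)
    rw [Set.Subset.antisymm hXw hwX]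
end
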